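/- arXiv:math/0610290 — 2 statements merged into one kernel-verified Lean document; each statement's English description precedes it below -/
import Mathlib

section
/- Let G be a finite group and let H₁,…,H_r and H'₁,…,H'_s be subgroups of G such that the complex permutation representations ⊕ᵢ ℂ[G/Hᵢ] and ⊕ⱼ ℂ[G/H'ⱼ] are isomorphic as representations of G. Let τ be an irreducible finite-dimensional complex representation of G equipped with a G-invariant positive-definite Hermitian inner product; for each subgroup H among the Hᵢ and H'ⱼ fix a basis of τ^{H} and let M_H denote the Gram matrix of the inner product on this basis. Let ρ be a complex representation of G equipped with a G-invariant positive-definite Hermitian inner product ⟨,⟩, together with a G-equivariant isomorphism ψ : ρ → τ^{⊕n}; equip each ρ^{H} with the basis obtained by pulling back through ψ the union, over the n copies of τ, of the chosen basis of τ^{H}. Then ∏ᵢ det((1/|Hᵢ|)⟨,⟩ | ρ^{Hᵢ}) / ∏ⱼ det((1/|H'ⱼ|)⟨,⟩ | ρ^{H'ⱼ}) = ( ∏ᵢ det((1/|Hᵢ|) M_{Hᵢ}) / ∏ⱼ det((1/|H'ⱼ|) M_{H'ⱼ}) )ⁿ, where det(B | W) denotes the determinant of the Gram matrix of the form B on the fixed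 basis of W, with det(B | 0) = 1, and (1/m)B denotes the form B scaled by 1/m. In particular the left-hand side is independent of the choice of ⟨,⟩. -/
/-- The submodule of vectors fixed by every element of a subgroup `H` under a
representation `ρ`. -/
def fixedSubmodule {k G V : Type} [CommRing k] [Group G] [AddCommGroup V] [Module k V]
    (ρ : Representation k G V) (H : Subgroup G) : Submodule k V where
  carrier := {v | ∀ h ∈ H, ρ h v = v}
  add_mem' := by
    intro a b ha hb h hh
    rw [map_add, ha h hh, hb h hh]
  zero_mem' := by
    intro h hh
    rw [map_zero]
  smul_mem' := by
    intro c v hv h hh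
    rw [map_smul, hv h hh]

/-!
By Schur's lemma, applied to the maps from `τ` to its conjugate dual, an invariant form on
`τ^{⊕n}` is `A ⊗ Bτ` for some `n × n` matrix `A`. Its Gram determinant on the `H`-fixed vectors
is therefore `det A ^ dim τ^H` times the `n`-th power of that of `Bτ`, and the same holds after
scaling both forms. By Frobenius reciprocity `∑ᵢ dim τ^{Hᵢ}` is the dimension of
`Hom_G(⊕ᵢ k[G/Hᵢ], τ)`, so the relation between the permutation representations makes the powers
of `det A` cancel.
-/

open Representation MonoidAlgebra

section FrobeniusReciprocity

variable {k G W : Type} [CommRing k] [Group G] [AddCommGroup W] [Module k W]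
  {τ : Representation k G W}

/-- The orbit map `gK ↦ τ(g) w` attached to a `K`-fixed vector `w`. -/
def orbitMap {K : Subgroup G} (w : fixedSubmodule τ K) : G ⧸ K → W :=
  Quotient.lift (fun g => τ g w) fun g g' hg => by
    have hw := w.2 _ (QuotientGroup.leftRel_apply.1 hg)
    rw [map_mul, Module.End.mul_apply] at hw
    rw [← hw, self_inv_apply, hw]

@[simp]
theorem orbitMap_mk {K : Subgroup G} (w : fixedSubmodule τ K) (g : G) :
    orbitMap w (g : G ⧸ K) = τ g w :=
  rfl

theorem orbitMap_smul {K : Subgroup G} (w : fixedSubmodule τ K) (g : G) (q : G ⧸ K) :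
    orbitMap w (g • q) = τ g (orbitMap w q) := by
  induction q using QuotientGroup.induction_on with
  | H x => rw [MulAction.Quotient.smul_coe, orbitMap_mk, orbitMap_mk, smul_eq_mul, map_mul,
      Module.End.mul_apply]

variable (τ) in
/-- Frobenius reciprocity for `⊕ᵢ k[G/Hᵢ]`: an intertwining map into `τ` is determined by the
images of the trivial cosets, which form an arbitrary family of `Hᵢ`-fixed vectors. -/
noncomputable def cosetIntertwiningMapEquiv {ι : Type*} (H : ι → Subgroup G) :
    IntertwiningMap (ofMulAction k G (Σ i, G ⧸ H i)) τ ≃ₗ[k] ∀ i, fixedSubmodule τ (H i) where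
  toFun f i := ⟨f (single ⟨i, ((1 : G) : G ⧸ H i)⟩ 1), fun h hh => by
    have hfix : h • ((1 : G) : G ⧸ H i) = (1 : G) :=
      MulAction.mem_stabilizer_iff.1 ((MulAction.stabilizer_quotient (H i)).symm ▸ hh)
    rw [← f.isIntertwining, ofMulAction_single, Sigma.smul_mk, hfix]⟩
  map_add' _ _ := rfl
  map_smul' _ _ := rfl
  invFun w :=
    { toLinearMap := Finsupp.linearCombination k (fun x : Σ i, G ⧸ H i => orbitMap (w x.1) x.2) ∘ₗ
        (coeffLinearEquiv k).toLinearMap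
      isIntertwining' := fun g => by
        ext ⟨i, q⟩
        simp [orbitMap_smul] }
  left_inv f := by
    ext ⟨i, q⟩
    induction q using QuotientGroup.induction_on with
    | H g => simp [← f.isIntertwining]
  right_inv w := by
    ext i
    simp

/-- Precomposition with an isomorphism of representations. -/
def intertwiningMapCongrLeft {k G V₁ V₂ W : Type*} [CommRing k] [Monoid G] [AddCommGroup V₁]
    [Module k V₁] [AddCommGroup V₂] [Module k V₂] [AddCommGroup W] [Module k W]
    {ρ₁ : Representation k G V₁} {ρ₂ : Representation k G V₂} (φ : ρ₁.Equiv ρ₂)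
    (τ : Representation k G W) :
    IntertwiningMap ρ₁ τ ≃ₗ[k] IntertwiningMap ρ₂ τ where
  toFun f := f.comp φ.symm.toIntertwiningMap
  map_add' _ _ := rfl
  map_smul' _ _ := rfl
  invFun f := f.comp φ.toIntertwiningMap
  left_inv f := by ext; simp
  right_inv f := by ext; simp

end FrobeniusReciprocity

theorem sum_finrank_fixedSubmodule_eq {k G W : Type} {ι κ : Type*} [Field k] [Group G] [Fintype ι]
    [Fintype κ] [AddCommGroup W] [Module k W] [FiniteDimensional k W]
    (τ : Representation k G W) (H : ι → Subgroup G) (H' : κ → Subgroup G)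
    (φ : (ofMulAction k G (Σ i, G ⧸ H i)).Equiv (ofMulAction k G (Σ j, G ⧸ H' j))) :
    ∑ i, Module.finrank k (fixedSubmodule τ (H i)) =
      ∑ j, Module.finrank k (fixedSubmodule τ (H' j)) := by
  rw [← Module.finrank_pi_fintype, ← Module.finrank_pi_fintype]
  exact ((cosetIntertwiningMapEquiv τ H).symm ≪≫ₗ intertwiningMapCongrLeft φ τ ≪≫ₗ
    cosetIntertwiningMapEquiv τ H').finrank_eq

section SemilinearDual

variable {k G W : Type*} [Field k] [Group G] [AddCommGroup W] [Module k W] {σ : k →+* k}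
  {τ : Representation k G W}

theorem exists_injective_semilinearMap_to_pi [FiniteDimensional k W] (σ : k →+* k) :
    ∃ f : (W →ₛₗ[σ] k) →ₗ[k] Fin (Module.finrank k W) → k, Function.Injective f := by
  let b := Module.finBasis k W
  exact ⟨LinearMap.pi fun i => LinearMap.id.flip (b i), fun f g h => b.ext fun i => congrFun h i⟩

theorem finiteDimensional_semilinearMap [FiniteDimensional k W] (σ : k →+* k) :
    FiniteDimensional k (W →ₛₗ[σ] k) :=
  let ⟨f, hf⟩ := exists_injective_semilinearMap_to_pi (W := W) σ
  .of_injective f hf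

theorem finrank_semilinearMap_le [FiniteDimensional k W] (σ : k →+* k) :
    Module.finrank k (W →ₛₗ[σ] k) ≤ Module.finrank k W := by
  obtain ⟨f, hf⟩ := exists_injective_semilinearMap_to_pi (W := W) σ
  simpa using LinearMap.finrank_le_finrank_of_injective hf

/-- The contragredient action on `σ`-semilinear functionals; for complex conjugation `σ` this is
the conjugate dual of `τ`. -/
def semilinearDual (σ : k →+* k) (τ : Representation k G W) :
    Representation k G (W →ₛₗ[σ] k) where
  toFun g := LinearMap.lcompₛₗ k k σ (τ g⁻¹)
  map_one' := by ext; simp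
  map_mul' g h := by ext; simp

/-- An invariant sesquilinear form, viewed as the intertwining map `w ↦ B(·, w)`. -/
def toSemilinearDual (B : W →ₛₗ[σ] W →ₗ[k] k)
    (hB : ∀ (g : G) (v w : W), B (τ g v) (τ g w) = B v w) :
    IntertwiningMap τ (semilinearDual σ τ) where
  toLinearMap := B.flip
  isIntertwining' g := by
    ext w v
    simpa [semilinearDual] using (hB g⁻¹ v (τ g w)).symm

@[simp]
theorem toSemilinearDual_apply (B : W →ₛₗ[σ] W →ₗ[k] k)
    (hB : ∀ (g : G) (v w : W), B (τ g v) (τ g w) = B v w) (v w : W) :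
    toSemilinearDual B hB w v = B v w :=
  rfl

theorem bijective_toSemilinearDual [τ.IsIrreducible] [FiniteDimensional k W]
    {B : W →ₛₗ[σ] W →ₗ[k] k} (hB : ∀ (g : G) (v w : W), B (τ g v) (τ g w) = B v w)
    (hB0 : B ≠ 0) : Function.Bijective (toSemilinearDual B hB) := by
  have hinj : Function.Injective (toSemilinearDual B hB) :=
    (IsIrreducible.injective_or_eq_zero _).resolve_right fun h =>
      hB0 <| LinearMap.ext₂ fun v w => DFunLike.congr_fun (DFunLike.congr_fun h w) v
  have := finiteDimensional_semilinearMap (W := W) σ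
  have hdim : Module.finrank k W = Module.finrank k (W →ₛₗ[σ] k) :=
    (LinearMap.finrank_le_finrank_of_injective (f := (toSemilinearDual B hB).toLinearMap)
      hinj).antisymm (finrank_semilinearMap_le σ)
  exact ⟨hinj, (LinearMap.injective_iff_surjective_of_finrank_eq_finrank hdim).1 hinj⟩

theorem exists_eq_smul_of_invariant [τ.IsIrreducible] [FiniteDimensional k W] [IsAlgClosed k]
    {B C : W →ₛₗ[σ] W →ₗ[k] k} (hB : ∀ (g : G) (v w : W), B (τ g v) (τ g w) = B v w)
    (hB0 : B ≠ 0) (hC : ∀ (g : G) (v w : W), C (τ g v) (τ g w) = C v w) :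
    ∃ μ : k, C = μ • B := by
  let β := IntertwiningMap.ofBijective _ (bijective_toSemilinearDual hB hB0)
  let T : IntertwiningMap τ τ := β.symm.toIntertwiningMap.comp (toSemilinearDual C hC)
  obtain ⟨μ, hμ⟩ := IsIrreducible.algebraMap_intertwiningMap_bijective_of_isAlgClosed.2 T
  refine ⟨μ, LinearMap.ext₂ fun v w => ?_⟩
  have hT : μ • w = T w := congr($hμ w)
  calc C v w = β (T w) v := by simp [T]
    _ = μ • B v w := by simp [← hT, β]

end SemilinearDual

section BlockForms

variable {k W m : Type*} [Field k] [AddCommGroup W] [Module k W] [DecidableEq m]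
  {σ : k →+* k} {A : Matrix m m k} {B : (m → W) →ₛₗ[σ] (m → W) →ₗ[k] k}
  {Bτ : W →ₛₗ[σ] W →ₗ[k] k}

theorem exists_matrix_forall_single_eq_mul {G : Type*} [Group G] [IsAlgClosed k]
    [FiniteDimensional k W] {τ : Representation k G W} [τ.IsIrreducible]
    (hBτ : ∀ (g : G) (v w : W), Bτ (τ g v) (τ g w) = Bτ v w) (hBτ0 : Bτ ≠ 0)
    (hB : ∀ (g : G) (x y : m → W), B ((τ g).compLeft m x) ((τ g).compLeft m y) = B x y) :
    ∃ A : Matrix m m k, ∀ i j v w, B (Pi.single i v) (Pi.single j w) = A i j * Bτ v w := by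
  have hsingle (g : G) (i : m) (v : W) :
      (τ g).compLeft m (Pi.single i v) = Pi.single i (τ g v) :=
    funext fun l => Pi.apply_single (fun _ => τ g) (fun _ => map_zero _) i v l
  let block (i j : m) : W →ₛₗ[σ] W →ₗ[k] k :=
    (B.comp (LinearMap.single k (fun _ => W) i)).compl₂ (LinearMap.single k (fun _ => W) j)
  have hblock (i j : m) : ∃ μ : k, block i j = μ • Bτ :=
    exists_eq_smul_of_invariant hBτ hBτ0 fun g v w => by
      simpa [hsingle, block] using hB g (Pi.single i v) (Pi.single j w)
  choose A hA using hblock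
  exact ⟨Matrix.of A, fun i j v w => congr($(hA i j) v w)⟩

variable [Fintype m]

theorem det_gram_eq_of_forall_single_eq_mul {α : Type*} [Fintype α] [DecidableEq α]
    (hA : ∀ i j v w, B (Pi.single i v) (Pi.single j w) = A i j * Bτ v w) (c : k) (u : α → W) :
    (Matrix.of fun x y : m × α => c * B (Pi.single x.1 (u x.2)) (Pi.single y.1 (u y.2))).det =
      A.det ^ Fintype.card α *
        (Matrix.of fun a a' => c * Bτ (u a) (u a')).det ^ Fintype.card m := by
  rw [← Matrix.det_kronecker]
  congr 1
  ext x y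
  simp only [Matrix.of_apply, Matrix.kroneckerMap_apply, hA]
  ring

theorem prod_det_gram_eq_of_forall_single_eq_mul {ι : Type*} [Fintype ι] {α : ι → Type*}
    [∀ i, Fintype (α i)] [∀ i, DecidableEq (α i)]
    (hA : ∀ i j v w, B (Pi.single i v) (Pi.single j w) = A i j * Bτ v w) (c : ι → k)
    (u : ∀ i, α i → W) :
    ∏ i, (Matrix.of fun x y : m × α i =>
        c i * B (Pi.single x.1 (u i x.2)) (Pi.single y.1 (u i y.2))).det =
      A.det ^ (∑ i, Fintype.card (α i)) *
        (∏ i, (Matrix.of fun x y => c i * Bτ (u i x) (u i y)).det) ^ Fintype.card m := by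
  simp_rw [det_gram_eq_of_forall_single_eq_mul hA, Finset.prod_mul_distrib,
    Finset.prod_pow_eq_pow_sum, Finset.prod_pow]

end BlockForms

section Nondegeneracy

theorem det_gram_ne_zero {k V α : Type*} [Field k] [AddCommGroup V] [Module k V] [Fintype α]
    [DecidableEq α] {σ : k →+* k} {B : V →ₛₗ[σ] V →ₗ[k] k} (hB : ∀ v, v ≠ 0 → B v v ≠ 0)
    {u : α → V} (hu : LinearIndependent k u) {c : k} (hc : c ≠ 0) :
    (Matrix.of fun x y => c * B (u x) (u y)).det ≠ 0 := by
  intro hdet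
  obtain ⟨a, ha, hMa⟩ := Matrix.exists_mulVec_eq_zero_iff.2 hdet
  let v := ∑ y, a y • u y
  have hv : v ≠ 0 := fun h => ha <| funext <| Fintype.linearIndependent_iff.1 hu a h
  have horth (x : α) : B (u x) v = 0 := by
    have hx : c * B (u x) v = 0 :=
      calc c * B (u x) v = ∑ y, c * B (u x) (u y) * a y := by
            simp only [v, map_sum, map_smul, smul_eq_mul, Finset.mul_sum]
            exact Finset.sum_congr rfl fun y _ => by ring
        _ = 0 := congrFun hMa x
    exact (mul_eq_zero.1 hx).resolve_left hc
  have hBv : B v = ∑ x, σ (a x) • B (u x) := by simp only [v, map_sum, map_smulₛₗ]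
  exact hB v hv (by simp [hBv, horth])

theorem linearIndependent_pi_single_prod {R W m α : Type*} [Semiring R] [AddCommMonoid W]
    [Module R W] [DecidableEq m] {u : α → W} (hu : LinearIndependent R u) :
    LinearIndependent R fun x : m × α => (Pi.single x.1 (u x.2) : m → W) :=
  (linearIndependent_equiv (Equiv.sigmaEquivProd m α)).1 <|
    Pi.linearIndependent_single (fun _ : m => u) fun _ => hu

end Nondegeneracy

section GramQuotient

variable {k G W : Type} {ι κ m V : Type*} [Field k] [IsAlgClosed k] {σ : k →+* k} [Group G]
  [Fintype ι] [Fintype κ] [Fintype m] [DecidableEq m]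
  (H : ι → Subgroup G) (H' : κ → Subgroup G)
  (φ : (ofMulAction k G (Σ i, G ⧸ H i)).Equiv (ofMulAction k G (Σ j, G ⧸ H' j)))
  [AddCommGroup W] [Module k W] [FiniteDimensional k W]
  (τ : Representation k G W) [τ.IsIrreducible]
  (Bτ : W →ₛₗ[σ] W →ₗ[k] k) (hBτ : ∀ (g : G) (v w : W), Bτ (τ g v) (τ g w) = Bτ v w)
  {α : ι → Type*} {α' : κ → Type*} [∀ i, Fintype (α i)] [∀ i, DecidableEq (α i)]
  [∀ j, Fintype (α' j)] [∀ j, DecidableEq (α' j)]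
  (b : ∀ i, Module.Basis (α i) k (fixedSubmodule τ (H i)))
  (b' : ∀ j, Module.Basis (α' j) k (fixedSubmodule τ (H' j)))
  [AddCommGroup V] [Module k V] (ρ : Representation k G V)
  (B : V →ₛₗ[σ] V →ₗ[k] k) (hB : ∀ (g : G) (v w : V), B (ρ g v) (ρ g w) = B v w)
  (ψ : V ≃ₗ[k] (m → W)) (hψ : ∀ (g : G) (v : V), ψ (ρ g v) = fun l => τ g (ψ v l))
  (c : ι → k) (c' : κ → k)

include φ hBτ hB hψ in
theorem prod_det_gram_mul_pow_eq_of_isotypic (hBτ0 : Bτ ≠ 0) :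
    (∏ i, (Matrix.of fun x y : m × α i =>
        c i * B (ψ.symm (Pi.single x.1 (b i x.2 : W))) (ψ.symm (Pi.single y.1 (b i y.2)))).det) *
      (∏ j, (Matrix.of fun x y : α' j => c' j * Bτ (b' j x) (b' j y)).det) ^ Fintype.card m =
    (∏ i, (Matrix.of fun x y : α i => c i * Bτ (b i x) (b i y)).det) ^ Fintype.card m *
      ∏ j, (Matrix.of fun x y : m × α' j => c' j *
        B (ψ.symm (Pi.single x.1 (b' j x.2 : W))) (ψ.symm (Pi.single y.1 (b' j y.2)))).det := by
  let Bψ : (m → W) →ₛₗ[σ] (m → W) →ₗ[k] k :=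
    (B.comp ψ.symm.toLinearMap).compl₂ ψ.symm.toLinearMap
  have hψsymm (g : G) (x : m → W) : ψ.symm ((τ g).compLeft m x) = ρ g (ψ.symm x) := by
    rw [LinearEquiv.symm_apply_eq, hψ, LinearEquiv.apply_symm_apply]
    rfl
  have hBψ (g : G) (x y : m → W) :
      Bψ ((τ g).compLeft m x) ((τ g).compLeft m y) = Bψ x y := by
    simp [Bψ, hψsymm, hB]
  obtain ⟨A, hA⟩ := exists_matrix_forall_single_eq_mul hBτ hBτ0 hBψ
  have hcard : ∑ i, Fintype.card (α i) = ∑ j, Fintype.card (α' j) := by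
    simpa only [Module.finrank_eq_card_basis (b _), Module.finrank_eq_card_basis (b' _)]
      using sum_finrank_fixedSubmodule_eq τ H H' φ
  have hι := prod_det_gram_eq_of_forall_single_eq_mul hA c fun i x => (b i x : W)
  have hκ := prod_det_gram_eq_of_forall_single_eq_mul hA c' fun j x => (b' j x : W)
  simp only [Bψ, LinearMap.compl₂_apply, LinearMap.comp_apply, LinearEquiv.coe_coe] at hι hκ
  rw [hι, hκ, hcard]
  ring

include φ hBτ hB hψ in
theorem gram_det_quotient_of_isotypic_general (hBτne : ∀ v, v ≠ 0 → Bτ v v ≠ 0)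
    (hBne : ∀ v, v ≠ 0 → B v v ≠ 0) (hc' : ∀ j, c' j ≠ 0) :
    (∏ i, (Matrix.of fun x y : m × α i =>
        c i * B (ψ.symm (Pi.single x.1 (b i x.2 : W))) (ψ.symm (Pi.single y.1 (b i y.2)))).det) /
      (∏ j, (Matrix.of fun x y : m × α' j => c' j *
        B (ψ.symm (Pi.single x.1 (b' j x.2 : W))) (ψ.symm (Pi.single y.1 (b' j y.2)))).det) =
    ((∏ i, (Matrix.of fun x y : α i => c i * Bτ (b i x) (b i y)).det) /
      (∏ j, (Matrix.of fun x y : α' j => c' j * Bτ (b' j x) (b' j y)).det)) ^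
        Fintype.card m := by
  have hBτ0 : Bτ ≠ 0 := by
    have : Nontrivial W := IsSimpleModule.nontrivial k[G] τ.asModule
    obtain ⟨w, hw⟩ := exists_ne (0 : W)
    exact fun h => hBτne w hw (by simp [h])
  have hb' (j : κ) : LinearIndependent k fun x => (b' j x : W) :=
    (b' j).linearIndependent.map' _ (Submodule.ker_subtype _)
  have hψb' (j : κ) :
      LinearIndependent k fun x : m × α' j => ψ.symm (Pi.single x.1 (b' j x.2 : W)) :=
    (linearIndependent_pi_single_prod (hb' j)).map' _ ψ.symm.ker
  have hτdet := (Finset.prod_ne_zero_iff (s := .univ)).2 fun j _ =>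
    det_gram_ne_zero hBτne (hb' j) (hc' j)
  have hρdet := (Finset.prod_ne_zero_iff (s := .univ)).2 fun j _ =>
    det_gram_ne_zero hBne (hψb' j) (hc' j)
  rw [div_pow, div_eq_div_iff hρdet (pow_ne_zero _ hτdet)]
  exact prod_det_gram_mul_pow_eq_of_isotypic H H' φ τ Bτ hBτ b b' ρ B hB ψ hψ c c' hBτ0

end GramQuotient

/-- An equivalence of permutation representations, from a linear equivalence of the underlying
spaces of finitely supported functions. -/
noncomputable def ofMulActionEquivOfFinsupp {k G X Y : Type*} [CommSemiring k] [Monoid G]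
    [MulAction G X] [MulAction G Y] (e : (X →₀ k) ≃ₗ[k] (Y →₀ k))
    (he : ∀ (g : G) (v : X →₀ k),
      e (ofMulAction k G X g (ofCoeff v)).coeff = (ofMulAction k G Y g (ofCoeff (e v))).coeff) :
    (ofMulAction k G X).Equiv (ofMulAction k G Y) :=
  .mk (coeffLinearEquiv k ≪≫ₗ e ≪≫ₗ (coeffLinearEquiv k).symm) fun g =>
    LinearMap.ext fun v => congrArg ofCoeff (he g v.coeff)

theorem isIrreducible_of_forall_submodule {k G W : Type*} [Field k] [Monoid G] [AddCommGroup W]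
    [Module k W] [Nontrivial W] {τ : Representation k G W}
    (h : ∀ U : Submodule k W, (∀ g : G, ∀ w ∈ U, τ g w ∈ U) → U = ⊥ ∨ U = ⊤) :
    τ.IsIrreducible where
  exists_pair_ne := ⟨⊥, ⊤, fun hbot => bot_ne_top congr(($hbot).toSubmodule)⟩
  eq_bot_or_eq_top U :=
    (h U.toSubmodule U.apply_mem_toSubmodule).imp (Subrepresentation.toSubmodule_injective ·)
      (Subrepresentation.toSubmodule_injective ·)

/-- Lemma 2.7 of the paper: given a relation `⊕ᵢ ℂ[G/Hᵢ] ≅ ⊕ⱼ ℂ[G/H'ⱼ]` of permutation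
representations, an irreducible complex representation `τ` with a `G`-invariant Hermitian
inner product `Bτ`, chosen bases of the fixed spaces `τ^H` with Gram matrices `M_H`, and
`ρ ≅ τ^{⊕n}` carrying a `G`-invariant Hermitian inner product `B`, the quotient of the Gram
determinants of the scaled forms `(1/|Hᵢ|)B` on `ρ^{Hᵢ}` (with respect to the bases induced
from those of `τ^{Hᵢ}` through the isomorphism `ψ`) equals the `n`-th power of the
corresponding quotient formed from the matrices `(1/|H|)M_H`. -/
theorem gram_det_quotient_of_isotypic
    {G : Type} [Group G] [Fintype G]
    {r s : ℕ} (H : Fin r → Subgroup G) (H' : Fin s → Subgroup G)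
    -- the relation between permutation representations
    (e : ((Σ i : Fin r, G ⧸ H i) →₀ ℂ) ≃ₗ[ℂ] ((Σ j : Fin s, G ⧸ H' j) →₀ ℂ))
    (he : ∀ (g : G) (v : (Σ i : Fin r, G ⧸ H i) →₀ ℂ),
      e (Representation.ofMulAction ℂ G (Σ i : Fin r, G ⧸ H i) g (MonoidAlgebra.ofCoeff v)).coeff =
        (Representation.ofMulAction ℂ G (Σ j : Fin s, G ⧸ H' j) g (MonoidAlgebra.ofCoeff (e v))).coeff)
    -- the irreducible representation τ with a G-invariant Hermitian inner product
    {W : Type} [AddCommGroup W] [Module ℂ W] [FiniteDimensional ℂ W] [Nontrivial W]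
    (τ : Representation ℂ G W)
    (hτirr : ∀ U : Submodule ℂ W, (∀ g : G, ∀ w ∈ U, τ g w ∈ U) → U = ⊥ ∨ U = ⊤)
    (Bτ : W →ₗ⋆[ℂ] W →ₗ[ℂ] ℂ)
    (hBτinv : ∀ (g : G) (v w : W), Bτ (τ g v) (τ g w) = Bτ v w)
    (hBτherm : ∀ v w : W, Bτ v w = starRingEnd ℂ (Bτ w v))
    (hBτpos : ∀ v : W, v ≠ 0 → 0 < (Bτ v v).re)
    -- chosen bases of the fixed subspaces τ^H
    (d : Fin r → ℕ) (d' : Fin s → ℕ)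
    (b : ∀ i, Module.Basis (Fin (d i)) ℂ (fixedSubmodule τ (H i)))
    (b' : ∀ j, Module.Basis (Fin (d' j)) ℂ (fixedSubmodule τ (H' j)))
    -- the representation ρ ≅ τ^{⊕n} with a G-invariant Hermitian inner product
    {V : Type} [AddCommGroup V] [Module ℂ V]
    (ρ : Representation ℂ G V)
    (B : V →ₗ⋆[ℂ] V →ₗ[ℂ] ℂ)
    (hBinv : ∀ (g : G) (v w : V), B (ρ g v) (ρ g w) = B v w)
    (hBherm : ∀ v w : V, B v w = starRingEnd ℂ (B w v))
    (hBpos : ∀ v : V, v ≠ 0 → 0 < (B v v).re)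
    (n : ℕ) (ψ : V ≃ₗ[ℂ] (Fin n → W))
    (hψ : ∀ (g : G) (v : V), ψ (ρ g v) = fun k => τ g (ψ v k)) :
    (∏ i, (Matrix.of fun x y : Fin n × Fin (d i) =>
        ((Nat.card (H i) : ℂ))⁻¹ *
          B (ψ.symm (Pi.single x.1 (b i x.2 : W))) (ψ.symm (Pi.single y.1 (b i y.2 : W)))).det) /
      (∏ j, (Matrix.of fun x y : Fin n × Fin (d' j) =>
        ((Nat.card (H' j) : ℂ))⁻¹ *
          B (ψ.symm (Pi.single x.1 (b' j x.2 : W)))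
            (ψ.symm (Pi.single y.1 (b' j y.2 : W)))).det) =
    ((∏ i, (Matrix.of fun a c : Fin (d i) =>
        ((Nat.card (H i) : ℂ))⁻¹ * Bτ (b i a : W) (b i c : W)).det) /
      (∏ j, (Matrix.of fun a c : Fin (d' j) =>
        ((Nat.card (H' j) : ℂ))⁻¹ * Bτ (b' j a : W) (b' j c : W)).det)) ^ n := by
  have := isIrreducible_of_forall_submodule hτirr
  simpa only [Fintype.card_fin] using gram_det_quotient_of_isotypic_general H H'
    (ofMulActionEquivOfFinsupp e he) τ Bτ hBτinv b b' ρ B hBinv ψ hψ _ _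
    (fun v hv h => by simpa [h] using hBτpos v hv) (fun v hv h => by simpa [h] using hBpos v hv)
    fun j => inv_ne_zero (Nat.cast_ne_zero.2 Nat.card_pos.ne')
end

section
/- Let G be a finite group and let H₁,…,H_r and H'₁,…,H'_s be subgroups of G such that the complex permutation representations ⊕ᵢ ℂ[G/Hᵢ] and ⊕ⱼ ℂ[G/H'ⱼ] are isomorphic as representations of G. Let ρ₁,…,ρ_t be pairwise non-isomorphic irreducible representations of G over ℚ, and let V be a finite-dimensional rational representation of G isomorphic to ⊕_k ρ_k^{⊕n_k}. Equip V with a G-invariant positive-definite symmetric ℚ-valued bilinear form B, and equip each ρ_k with a G-invariant positive-definite symmetric ℚ-valued bilinear form B_k. Then ∏ᵢ det((1/|Hᵢ|)B | V^{Hᵢ}) / ∏ⱼ det((1/|H'ⱼ|)B | V^{H'ⱼ}) = q² · ∏_k ( ∏ᵢ det((1/|Hᵢ|)B_k | ρ_k^{Hᵢ}) / ∏ⱼ det((1/|H'ⱼ|)B_k | ρ_k^{H'ⱼ}) )^{n_k} for some nonzero rational number q, where all Gram determinants are computed with respect to arbitrary ℚ-bases of the respective fixed subspaces. -/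
section EqUpToSquare

variable {K : Type*} [Field K]

/-- Equality up to the square of a nonzero factor. On nonzero elements this is equality in
`Kˣ / (Kˣ)²`, the group in which regulator constants are compared. -/
def EqUpToSquare (a b : K) : Prop := ∃ q : K, q ≠ 0 ∧ a = q ^ 2 * b

namespace EqUpToSquare

variable {a b c d : K}

theorem symm (h : EqUpToSquare a b) : EqUpToSquare b a := by
  obtain ⟨q, hq, rfl⟩ := h
  exact ⟨q⁻¹, inv_ne_zero hq, by field_simp⟩

theorem trans (hab : EqUpToSquare a b) (hbc : EqUpToSquare b c) : EqUpToSquare a c := by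
  obtain ⟨p, hp, rfl⟩ := hab
  obtain ⟨q, hq, rfl⟩ := hbc
  exact ⟨p * q, mul_ne_zero hp hq, by ring⟩

theorem mul (hab : EqUpToSquare a b) (hcd : EqUpToSquare c d) :
    EqUpToSquare (a * c) (b * d) := by
  obtain ⟨p, hp, rfl⟩ := hab
  obtain ⟨q, hq, rfl⟩ := hcd
  exact ⟨p * q, mul_ne_zero hp hq, by ring⟩

theorem pow (h : EqUpToSquare a b) (n : ℕ) : EqUpToSquare (a ^ n) (b ^ n) := by
  obtain ⟨q, hq, rfl⟩ := h
  exact ⟨q ^ n, pow_ne_zero n hq, by ring⟩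

theorem prod {ι : Type*} {s : Finset ι} {f g : ι → K} (h : ∀ i, EqUpToSquare (f i) (g i)) :
    EqUpToSquare (∏ i ∈ s, f i) (∏ i ∈ s, g i) :=
  Finset.prod_hom_rel ⟨1, one_ne_zero, by simp⟩ fun i _ _ hbc => (h i).mul hbc

theorem div_of_eq_mul (h : EqUpToSquare b (d * a)) (ha : a ≠ 0) : EqUpToSquare (a / b) d⁻¹ := by
  obtain ⟨q, hq, rfl⟩ := h
  exact ⟨q⁻¹, inv_ne_zero hq, by field_simp⟩

end EqUpToSquare

end EqUpToSquare

section Determinants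

open LinearMap.BilinForm (toMatrix)

theorem det_blockDiagonal'_eq_prod {R ι : Type*} [CommRing R] [Fintype ι] [DecidableEq ι]
    {m : ι → Type*} [∀ i, Fintype (m i)] [∀ i, DecidableEq (m i)]
    (A : ∀ i, Matrix (m i) (m i) R) :
    (Matrix.blockDiagonal' A).det = ∏ i, (A i).det := by
  let : LinearOrder ι := LinearOrder.lift' (Fintype.equivFin ι) (Fintype.equivFin ι).injective
  rw [(Matrix.blockTriangular_blockDiagonal' A).det_fintype]
  refine Finset.prod_congr rfl fun i _ => ?_
  rw [← Matrix.det_submatrix_equiv_self (Equiv.sigmaSubtype i).symm]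
  congr 1
  ext a b
  simp [Matrix.toSquareBlock_def, Equiv.sigmaSubtype]

theorem det_piMap_eq_prod {R ι : Type*} [CommRing R] [Fintype ι] {E : ι → Type*}
    [∀ i, AddCommGroup (E i)] [∀ i, Module R (E i)] [∀ i, Module.Free R (E i)]
    [∀ i, Module.Finite R (E i)] (f : ∀ i, E i →ₗ[R] E i) :
    LinearMap.det (LinearMap.piMap f) = ∏ i, LinearMap.det (f i) := by
  classical
  let b i := Module.Free.chooseBasis R (E i)
  have hblock : LinearMap.toMatrix (Pi.basis b) (Pi.basis b) (LinearMap.piMap f) =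
      Matrix.blockDiagonal' fun i => LinearMap.toMatrix (b i) (b i) (f i) := by
    ext ⟨i, a⟩ ⟨j, c⟩
    rw [LinearMap.toMatrix_apply, Pi.basis_apply, Pi.basis_repr]
    obtain rfl | hij := eq_or_ne i j
    · simp [LinearMap.toMatrix_apply]
    · simp [Matrix.blockDiagonal'_apply_ne _ _ _ hij, Pi.single_eq_of_ne hij]
  rw [← LinearMap.det_toMatrix (Pi.basis b), hblock, det_blockDiagonal'_eq_prod]
  simp

theorem det_toMatrix_eq_prod_of_eq_sum {R ι E : Type*} [CommRing R] [Fintype ι] [DecidableEq ι]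
    {m : ι → Type*} [∀ i, Fintype (m i)] [∀ i, DecidableEq (m i)] [AddCommGroup E] [Module R E]
    {F : ι → Type*} [∀ i, AddCommGroup (F i)] [∀ i, Module R (F i)]
    (b : ∀ i, Module.Basis (m i) R (F i)) (Φ : E ≃ₗ[R] ∀ i, F i)
    (β : LinearMap.BilinForm R E) (γ : ∀ i, LinearMap.BilinForm R (F i))
    (h : ∀ x y, β x y = ∑ i, γ i (Φ x i) (Φ y i)) :
    (toMatrix ((Pi.basis b).map Φ.symm) β).det = ∏ i, (toMatrix (b i) (γ i)).det := by
  rw [← det_blockDiagonal'_eq_prod]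
  congr 1
  ext ⟨i, a⟩ ⟨j, c⟩
  simp only [LinearMap.BilinForm.toMatrix_apply, h, Module.Basis.map_apply,
    LinearEquiv.apply_symm_apply, Pi.basis_apply]
  rw [Finset.sum_eq_single i (fun k _ hk => by simp [Pi.single_eq_of_ne hk]) (by simp)]
  obtain rfl | hij := eq_or_ne i j
  · simp
  · simp [Matrix.blockDiagonal'_apply_ne _ _ _ hij, Pi.single_eq_of_ne hij]

variable {K E F ι κ : Type*} [Field K] [AddCommGroup E] [Module K E] [AddCommGroup F] [Module K F]
  [Fintype ι] [DecidableEq ι] [Fintype κ] [DecidableEq κ]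

theorem eqUpToSquare_det_toMatrix (b : Module.Basis ι K E) (c : Module.Basis κ K E)
    (β : LinearMap.BilinForm K E) :
    EqUpToSquare (toMatrix c β).det (toMatrix b β).det := by
  let σ := c.indexEquiv b
  have hreindex : (toMatrix c β).det = (toMatrix (c.reindex σ) β).det := by
    rw [← Matrix.det_submatrix_equiv_self σ.symm (toMatrix c β)]
    congr 1
    ext i j
    simp [LinearMap.BilinForm.toMatrix_apply]
  refine ⟨b.det (c.reindex σ), (b.isUnit_det _).ne_zero, ?_⟩
  rw [hreindex, ← LinearMap.BilinForm.toMatrix_mul_basis_toMatrix b (c.reindex σ) β,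
    Matrix.det_mul, Matrix.det_mul, Matrix.det_transpose, Module.Basis.det_apply]
  ring

theorem eqUpToSquare_det_toMatrix_of_pullback_eq_compLeft (b : Module.Basis ι K E)
    (c : Module.Basis κ K F) (β : LinearMap.BilinForm K E) (γ : LinearMap.BilinForm K F)
    (Φ : E ≃ₗ[K] F) (N : E →ₗ[K] E) (h : ∀ x y, γ (Φ x) (Φ y) = β (N x) y) :
    EqUpToSquare (toMatrix c γ).det (LinearMap.det N * (toMatrix b β).det) := by
  have hpull : toMatrix (b.map Φ) γ = toMatrix b (β.compLeft N) := by
    ext i j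
    simpa [LinearMap.BilinForm.toMatrix_apply] using h (b i) (b j)
  have hdet := eqUpToSquare_det_toMatrix (b.map Φ) c γ
  rwa [hpull, LinearMap.BilinForm.toMatrix_compLeft, Matrix.det_mul, Matrix.det_transpose,
    LinearMap.det_toMatrix] at hdet

theorem separatingLeft_of_forall_pos {K V : Type*} [CommRing K] [Preorder K] [AddCommGroup V]
    [Module K V] {B : LinearMap.BilinForm K V} (hB : ∀ v, v ≠ 0 → 0 < B v v) :
    B.SeparatingLeft :=
  fun v hv => by_contra fun hne => (hB v hne).ne' (hv v)

end Determinants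

section InvariantMatrix

variable {G R X Y Z : Type*} [Group G] [MulAction G X] [MulAction G Y] [MulAction G Z]

/-- A matrix with rows and columns indexed by `G`-sets is invariant when it is constant on the
orbits of `G` on pairs, i.e. when it commutes with the two permutation representations. -/
def IsInvariantMatrix (G : Type*) [Group G] [MulAction G X] [MulAction G Y]
    (M : Matrix Y X R) : Prop :=
  ∀ (g : G) (y : Y) (x : X), M (g • y) (g • x) = M y x

/-- The invariant matrix whose entry at `(y, x)` is the value of `a` at the `G`-orbit of
`(y, x)`. -/
def orbitMatrix (a : MulAction.orbitRel.Quotient G (Y × X) → R) : Matrix Y X R :=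
  Matrix.of fun y x => a (Quotient.mk _ (y, x))

theorem isInvariantMatrix_orbitMatrix (a : MulAction.orbitRel.Quotient G (Y × X) → R) :
    IsInvariantMatrix G (orbitMatrix a) :=
  fun g _ _ => congrArg a (Quotient.sound ⟨g, rfl⟩)

theorem IsInvariantMatrix.exists_orbitMatrix_eq {M : Matrix Y X R} (hM : IsInvariantMatrix G M) :
    ∃ a : MulAction.orbitRel.Quotient G (Y × X) → R, orbitMatrix a = M := by
  refine ⟨Quotient.lift (fun p => M p.1 p.2) ?_, rfl⟩
  rintro _ ⟨y, x⟩ ⟨g, rfl⟩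
  exact hM g y x

namespace IsInvariantMatrix

theorem transpose {M : Matrix Y X R} (hM : IsInvariantMatrix G M) :
    IsInvariantMatrix G M.transpose :=
  fun g x y => hM g y x

theorem submatrix_toPerm {M : Matrix Y X R} (hM : IsInvariantMatrix G M) (g : G) :
    M.submatrix (MulAction.toPerm g) (MulAction.toPerm g) = M :=
  Matrix.ext fun y x => hM g y x

variable [CommRing R]

theorem mul [Fintype Y] {M : Matrix Y X R} {L : Matrix Z Y R} (hL : IsInvariantMatrix G L)
    (hM : IsInvariantMatrix G M) : IsInvariantMatrix G (L * M) := by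
  intro g z x
  rw [Matrix.mul_apply, Matrix.mul_apply, ← Equiv.sum_comp (MulAction.toPerm g)]
  simp [hM g, hL g]

theorem of_mul_eq_one [Fintype X] [Fintype Y] [DecidableEq X] [DecidableEq Y] {M : Matrix Y X R}
    {L : Matrix X Y R} (hM : IsInvariantMatrix G M) (hLM : L * M = 1) (hML : M * L = 1) :
    IsInvariantMatrix G L := by
  intro g x y
  let L' : Matrix X Y R := L.submatrix (MulAction.toPerm g) (MulAction.toPerm g)
  have hL'M : L' * M = 1 := by
    rw [← hM.submatrix_toPerm g, Matrix.submatrix_mul_equiv, hLM, Matrix.submatrix_one_equiv]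
  have hL' : L' = L := by
    rw [← Matrix.mul_one L', ← hML, ← Matrix.mul_assoc, hL'M, Matrix.one_mul]
  exact congrFun (congrFun hL' x) y

end IsInvariantMatrix

end InvariantMatrix

section Descent

variable {G K L X Y : Type*} [Group G] [MulAction G X] [MulAction G Y] [Field K] [CommRing L]
  [Fintype X] [DecidableEq X]

/- The determinant of the generic invariant matrix is a polynomial over `K` which does not vanish
at the orbit values of `A`, so it is nonzero, so it has a nonzero value over the infinite `K`. -/
theorem exists_isInvariantMatrix_det_submatrix_ne_zero [Infinite K] [Algebra K L]
    {A : Matrix Y X L} (hA : IsInvariantMatrix G A) (σ : X ≃ Y)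
    (hdet : (A.submatrix σ id).det ≠ 0) :
    ∃ M : Matrix Y X K, IsInvariantMatrix G M ∧ (M.submatrix σ id).det ≠ 0 := by
  obtain ⟨c, rfl⟩ := hA.exists_orbitMatrix_eq
  let generic : Matrix Y X (MvPolynomial (MulAction.orbitRel.Quotient G (Y × X)) K) :=
    orbitMatrix MvPolynomial.X
  have hgeneric : (generic.submatrix σ id).det ≠ 0 := by
    intro hzero
    apply hdet
    have haeval := congrArg (MvPolynomial.aeval c) hzero
    rw [AlgHom.map_det, map_zero] at haeval
    rw [← haeval]
    congr 1
    ext x x'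
    simp [generic, orbitMatrix]
  obtain ⟨a, ha⟩ : ∃ a, MvPolynomial.eval a (generic.submatrix σ id).det ≠ 0 := by
    by_contra! hzero
    exact hgeneric (MvPolynomial.funext fun a => by simpa using hzero a)
  refine ⟨orbitMatrix a, isInvariantMatrix_orbitMatrix a, ?_⟩
  rw [RingHom.map_det] at ha
  convert ha using 2
  ext x x'
  simp [generic, orbitMatrix]

variable [Fintype Y] [DecidableEq Y]

theorem exists_mul_eq_one_of_isUnit_det_submatrix {R : Type*} [CommRing R] {M : Matrix Y X R}
    (σ : X ≃ Y) (hM : IsUnit (M.submatrix σ id).det) :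
    ∃ N : Matrix X Y R, N * M = 1 ∧ M * N = 1 := by
  let S := M.submatrix σ id
  have hMS : M = S.submatrix σ.symm (Equiv.refl X) := by
    ext y x
    simp [S]
  refine ⟨S⁻¹.submatrix (Equiv.refl X) σ.symm, ?_, ?_⟩
  · rw [hMS, Matrix.submatrix_mul_equiv, Matrix.nonsing_inv_mul _ hM, Matrix.submatrix_one_equiv]
  · rw [hMS, Matrix.submatrix_mul_equiv, Matrix.mul_nonsing_inv _ hM, Matrix.submatrix_one_equiv]

variable (K) in
theorem exists_isInvariantMatrix_mul_eq_one [Infinite K] [Nontrivial L] [Algebra K L]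
    (e : (X →₀ L) ≃ₗ[L] (Y →₀ L))
    (he : ∀ (g : G) (v : X →₀ L),
      e (Representation.ofMulAction L G X g (MonoidAlgebra.ofCoeff v)).coeff =
        (Representation.ofMulAction L G Y g (MonoidAlgebra.ofCoeff (e v))).coeff) :
    ∃ (M : Matrix Y X K) (N : Matrix X Y K), IsInvariantMatrix G M ∧ N * M = 1 ∧ M * N = 1 := by
  let A : Matrix Y X L :=
    LinearMap.toMatrix Finsupp.basisSingleOne Finsupp.basisSingleOne e.toLinearMap
  have hA : IsInvariantMatrix G A := by
    intro g y x
    have hgx := congrArg (fun f : Y →₀ L => f (g • y)) (he g (Finsupp.single x 1))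
    simpa [A, LinearMap.toMatrix_apply, Representation.coeff_ofMulAction] using hgx
  let σ : X ≃ Y := (Finsupp.basisSingleOne.map e).indexEquiv Finsupp.basisSingleOne
  have hdet : (A.submatrix σ id).det ≠ 0 := by
    convert (e.isUnit_det Finsupp.basisSingleOne
      (Finsupp.basisSingleOne.reindex σ.symm)).ne_zero using 2
    ext x x'
    simp [A, LinearMap.toMatrix_apply]
  obtain ⟨M, hM, hMdet⟩ := exists_isInvariantMatrix_det_submatrix_ne_zero (K := K) hA σ hdet
  obtain ⟨N, hNM, hMN⟩ := exists_mul_eq_one_of_isUnit_det_submatrix σ hMdet.isUnit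
  exact ⟨M, N, hM, hNM, hMN⟩

end Descent

section EquivariantFunctions

variable {G K V X Y Z : Type*} [Group G] [CommRing K] [AddCommGroup V] [Module K V]
  [MulAction G X] [MulAction G Y] [MulAction G Z]

/-- The `G`-equivariant functions from a `G`-set `X` to a representation; for `X = G ⧸ H` these
are the `H`-fixed vectors, see `equivariantFunctionsQuotientEquiv`. -/
def equivariantFunctions (ρ : Representation K G V) (X : Type*) [MulAction G X] :
    Submodule K (X → V) where
  carrier := {f | ∀ (g : G) (x : X), f (g • x) = ρ g (f x)}
  add_mem' hf hf' g x := by simp [hf g x, hf' g x]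
  zero_mem' g x := by simp
  smul_mem' c f hf g x := by simp [hf g x]

namespace IsInvariantMatrix

/-- The action of an invariant matrix on equivariant functions, by
`(M f) y = ∑ x, M y x • f x`. -/
def mapEquivariant [Fintype X] {M : Matrix Y X K} (hM : IsInvariantMatrix G M)
    (ρ : Representation K G V) : equivariantFunctions ρ X →ₗ[K] equivariantFunctions ρ Y where
  toFun f := ⟨fun y => ∑ x, M y x • f.1 x, fun g y => by
    change ∑ x, M (g • y) x • f.1 x = ρ g (∑ x, M y x • f.1 x)
    rw [map_sum, ← Equiv.sum_comp (MulAction.toPerm g) fun x => M (g • y) x • f.1 x]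
    refine Finset.sum_congr rfl fun x _ => ?_
    rw [MulAction.toPerm_apply, hM g y x, f.2 g x, map_smul]⟩
  map_add' f f' := by
    ext y
    simp [Finset.sum_add_distrib]
  map_smul' c f := by
    ext y
    simp [Finset.smul_sum, smul_comm c]

variable (ρ : Representation K G V)

theorem mapEquivariant_apply [Fintype X] {M : Matrix Y X K} (hM : IsInvariantMatrix G M)
    (f : equivariantFunctions ρ X) (y : Y) :
    (hM.mapEquivariant ρ f).1 y = ∑ x, M y x • f.1 x := rfl

theorem mapEquivariant_mul [Fintype X] [Fintype Y] {M : Matrix Y X K} {L : Matrix Z Y K}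
    (hL : IsInvariantMatrix G L) (hM : IsInvariantMatrix G M) :
    (hL.mul hM).mapEquivariant ρ = hL.mapEquivariant ρ ∘ₗ hM.mapEquivariant ρ := by
  ext f z
  simp only [LinearMap.comp_apply, mapEquivariant_apply, Matrix.mul_apply, Finset.smul_sum,
    Finset.sum_smul, smul_smul]
  exact Finset.sum_comm

theorem mapEquivariant_of_eq_one [Fintype X] [DecidableEq X] {M : Matrix X X K}
    (hM : IsInvariantMatrix G M) (h : M = 1) : hM.mapEquivariant ρ = LinearMap.id := by
  subst h
  ext f x
  simp [mapEquivariant_apply, Matrix.one_apply]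

/-- The isomorphism between spaces of equivariant functions given by an invertible invariant
matrix. -/
def equivariantEquiv [Fintype X] [Fintype Y] [DecidableEq X] [DecidableEq Y] {M : Matrix Y X K}
    {L : Matrix X Y K} (hM : IsInvariantMatrix G M) (hLM : L * M = 1) (hML : M * L = 1) :
    equivariantFunctions ρ X ≃ₗ[K] equivariantFunctions ρ Y :=
  have hL := hM.of_mul_eq_one hLM hML
  LinearEquiv.ofLinearMap (hM.mapEquivariant ρ) (hL.mapEquivariant ρ)
    (by rw [← mapEquivariant_mul, mapEquivariant_of_eq_one ρ _ hML])
    (by rw [← mapEquivariant_mul, mapEquivariant_of_eq_one ρ _ hLM])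

end IsInvariantMatrix

/-- Equivariant functions into a representation isomorphic to a direct product decompose
componentwise. -/
def equivariantFunctionsPiEquiv {ι : Type*} {W : ι → Type*} [∀ i, AddCommGroup (W i)]
    [∀ i, Module K (W i)] (ρ : ∀ i, Representation K G (W i)) (ρV : Representation K G V)
    (φ : V ≃ₗ[K] ∀ i, W i) (hφ : ∀ g v i, φ (ρV g v) i = ρ i g (φ v i)) (X : Type*)
    [MulAction G X] :
    equivariantFunctions ρV X ≃ₗ[K] ∀ i, equivariantFunctions (ρ i) X where
  toFun f i := ⟨fun x => φ (f.1 x) i, fun g x => by simp only [f.2 g x, hφ]⟩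
  map_add' f f' := by
    ext i x
    simp
  map_smul' c f := by
    ext i x
    simp
  invFun F := ⟨fun x => φ.symm fun i => (F i).1 x, fun g x => φ.injective <| by
    ext i
    rw [hφ, LinearEquiv.apply_symm_apply, LinearEquiv.apply_symm_apply]
    exact (F i).2 g x⟩
  left_inv f := by
    ext x
    simp
  right_inv F := by
    ext i x
    simp

/-- Equivariant functions on a disjoint union of `G`-sets are families of equivariant functions
on the parts. -/
def equivariantFunctionsSigmaEquiv {ι : Type*} (X : ι → Type*) [∀ i, MulAction G (X i)]
    (ρ : Representation K G V) :
    equivariantFunctions ρ (Σ i, X i) ≃ₗ[K] ∀ i, equivariantFunctions ρ (X i) where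
  toFun f i := ⟨fun x => f.1 ⟨i, x⟩, fun g x => f.2 g ⟨i, x⟩⟩
  map_add' _ _ := rfl
  map_smul' _ _ := rfl
  invFun F := ⟨fun p => (F p.1).1 p.2, fun g p => (F p.1).2 g p.2⟩

namespace IsInvariantMatrix

variable {K V ι : Type*} [Field K] [AddCommGroup V] [Module K V] [Fintype ι] {W : ι → Type*}
  [∀ i, AddCommGroup (W i)] [∀ i, Module K (W i)] [∀ i, FiniteDimensional K (W i)] [Fintype X]
  {M : Matrix X X K}

theorem det_mapEquivariant_eq_prod (hM : IsInvariantMatrix G M)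
    (ρ : ∀ i, Representation K G (W i)) (ρV : Representation K G V) (φ : V ≃ₗ[K] ∀ i, W i)
    (hφ : ∀ g v i, φ (ρV g v) i = ρ i g (φ v i)) :
    LinearMap.det (hM.mapEquivariant ρV) = ∏ i, LinearMap.det (hM.mapEquivariant (ρ i)) := by
  let Φ := equivariantFunctionsPiEquiv ρ ρV φ hφ X
  have hconj : Φ.toLinearMap ∘ₗ hM.mapEquivariant ρV ∘ₗ Φ.symm.toLinearMap =
      LinearMap.piMap fun i => hM.mapEquivariant (ρ i) := by
    rw [← LinearMap.comp_assoc, LinearEquiv.comp_toLinearMap_symm_eq]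
    ext f i y
    change φ (∑ x, M y x • f.1 x) i = ∑ x, M y x • φ (f.1 x) i
    simp
  rw [← LinearMap.det_conj _ Φ, hconj, det_piMap_eq_prod]

theorem det_mapEquivariant_eq_prod_pow (hM : IsInvariantMatrix G M)
    (ρ : ∀ i, Representation K G (W i)) (ρV : Representation K G V) {n : ι → ℕ}
    (ψ : V ≃ₗ[K] ∀ i, Fin (n i) → W i)
    (hψ : ∀ (g : G) (v : V), ψ (ρV g v) = fun i a => ρ i g (ψ v i a)) :
    LinearMap.det (hM.mapEquivariant ρV) =
      ∏ i, LinearMap.det (hM.mapEquivariant (ρ i)) ^ n i := by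
  rw [hM.det_mapEquivariant_eq_prod (fun p : Σ i, Fin (n i) => ρ p.1) ρV
    (ψ ≪≫ₗ (LinearEquiv.piCurry K fun i (_ : Fin (n i)) => W i).symm)
    (fun g v p => congrFun (congrFun (hψ g v) p.1) p.2), Fintype.prod_sigma]
  exact Finset.prod_congr rfl fun i _ =>
    Fin.prod_const (n i) (LinearMap.det (hM.mapEquivariant (ρ i)))

end IsInvariantMatrix

end EquivariantFunctions

section AveragedForm

variable {G K V X Y : Type*} [Group G] [Field K] [AddCommGroup V] [Module K V]
  [MulAction G X] [MulAction G Y] [Fintype X] [Fintype Y]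

/-- The form `|G|⁻¹ ∑ x, B (f x) (f' x)` on equivariant functions, normalized so that it becomes
`|H|⁻¹ B` on `H`-fixed vectors when `X = G ⧸ H`, see `averagedForm_quotient`. -/
noncomputable def averagedForm (ρ : Representation K G V) (X : Type*) [MulAction G X] [Fintype X]
    (B : LinearMap.BilinForm K V) : LinearMap.BilinForm K (equivariantFunctions ρ X) :=
  (Nat.card G : K)⁻¹ • ∑ x : X,
    B.compl₁₂ (LinearMap.proj x ∘ₗ (equivariantFunctions ρ X).subtype)
      (LinearMap.proj x ∘ₗ (equivariantFunctions ρ X).subtype)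

variable (ρ : Representation K G V) (B : LinearMap.BilinForm K V)

theorem averagedForm_apply (f f' : equivariantFunctions ρ X) :
    averagedForm ρ X B f f' = (Nat.card G : K)⁻¹ * ∑ x, B (f.1 x) (f'.1 x) := by
  simp [averagedForm, LinearMap.sum_apply]

theorem averagedForm_sigma {ι : Type*} [Fintype ι] {X : ι → Type*} [∀ i, MulAction G (X i)]
    [∀ i, Fintype (X i)] (f f' : equivariantFunctions ρ (Σ i, X i)) :
    averagedForm ρ (Σ i, X i) B f f' =
      ∑ i, averagedForm ρ (X i) B (equivariantFunctionsSigmaEquiv X ρ f i)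
        (equivariantFunctionsSigmaEquiv X ρ f' i) := by
  simp only [averagedForm_apply, Fintype.sum_sigma, Finset.mul_sum]
  rfl

theorem averagedForm_mapEquivariant_transpose {M : Matrix Y X K} (hM : IsInvariantMatrix G M)
    (f : equivariantFunctions ρ Y) (f' : equivariantFunctions ρ X) :
    averagedForm ρ X B (hM.transpose.mapEquivariant ρ f) f' =
      averagedForm ρ Y B f (hM.mapEquivariant ρ f') := by
  simp only [averagedForm_apply, IsInvariantMatrix.mapEquivariant_apply, Matrix.transpose_apply,
    map_sum, map_smul, LinearMap.sum_apply, LinearMap.smul_apply]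
  rw [Finset.sum_comm]

variable {ρ B} (hBinv : ∀ (g : G) (v w : V), B (ρ g v) (ρ g w) = B v w)

include hBinv

theorem exists_forall_averagedForm_eq [Finite G] [NeZero (Nat.card G : K)] (x : X) (v : V) :
    ∃ f', ∀ f, averagedForm ρ X B f f' = B (f.1 x) v := by
  classical
  have := Fintype.ofFinite G
  refine ⟨⟨fun y => ∑ g : G with g • x = y, ρ g v, fun h y => ?_⟩, fun f => ?_⟩
  · rw [map_sum]
    refine (Finset.sum_equiv (Equiv.mulLeft h) (fun g => ?_) fun g _ => ?_).symm
    · simp [mul_smul]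
    · simp
  · have hfiber (y : X) : B (f.1 y) (∑ g : G with g • x = y, ρ g v) =
        ∑ g : G with g • x = y, B (f.1 x) v := by
      rw [map_sum]
      refine Finset.sum_congr rfl fun g hg => ?_
      rw [← (Finset.mem_filter.mp hg).2, f.2, hBinv]
    rw [averagedForm_apply, Finset.sum_congr rfl fun y _ => hfiber y,
      Finset.sum_fiberwise Finset.univ (fun g : G => g • x) fun _ => B (f.1 x) v, Finset.sum_const,
      Finset.card_univ, ← Nat.card_eq_fintype_card, nsmul_eq_mul,
      inv_mul_cancel_left₀ (NeZero.ne _)]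

theorem separatingLeft_averagedForm [Finite G] [NeZero (Nat.card G : K)]
    (hB : B.SeparatingLeft) : (averagedForm ρ X B).SeparatingLeft := by
  intro f hf
  ext x
  refine hB _ fun v => ?_
  obtain ⟨f', hf'⟩ := exists_forall_averagedForm_eq (X := X) hBinv x v
  rw [← hf', hf]

end AveragedForm

section FixedSubmodules

open LinearMap.BilinForm (toMatrix)

variable {G K V : Type} [Group G] [Field K] [AddCommGroup V] [Module K V]

theorem smul_quotient_mk_one (H : Subgroup G) (g : G) : g • ((1 : G) : G ⧸ H) = (g : G ⧸ H) := by
  rw [MulAction.Quotient.smul_coe, smul_eq_mul, mul_one]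

/-- Evaluation at the base point identifies equivariant functions on `G ⧸ H` with `H`-fixed
vectors (Frobenius reciprocity). -/
def equivariantFunctionsQuotientEquiv (ρ : Representation K G V) (H : Subgroup G) :
    equivariantFunctions ρ (G ⧸ H) ≃ₗ[K] fixedSubmodule ρ H where
  toFun f := ⟨f.1 ((1 : G) : G ⧸ H), fun h hh => by
    rw [← f.2 h, smul_quotient_mk_one, QuotientGroup.eq.mpr (by simpa using hh : h⁻¹ * 1 ∈ H)]⟩
  map_add' _ _ := rfl
  map_smul' _ _ := rfl
  invFun v := ⟨fun x => Quotient.liftOn' x (fun g => ρ g v) fun a b hab => by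
      rw [QuotientGroup.leftRel_apply] at hab
      have hfix : ρ (a⁻¹ * b) v = v := v.2 _ hab
      rw [← hfix, ← Module.End.mul_apply, ← map_mul, mul_inv_cancel_left, hfix],
    fun g x => by
      induction x using QuotientGroup.induction_on with
      | H a =>
        change ρ (g * a) v = ρ g (ρ a v)
        rw [map_mul, Module.End.mul_apply]⟩
  left_inv f := by
    ext x
    induction x using QuotientGroup.induction_on with
    | H a =>
      change ρ a (f.1 ((1 : G) : G ⧸ H)) = _
      rw [← f.2 a, smul_quotient_mk_one]
  right_inv v := by
    ext
    change ρ 1 (v : V) = v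
    simp

/-- The form `(1/|H|) B` on the `H`-fixed vectors. -/
noncomputable def fixedForm (ρ : Representation K G V) (H : Subgroup G)
    (B : LinearMap.BilinForm K V) : LinearMap.BilinForm K (fixedSubmodule ρ H) :=
  (Nat.card H : K)⁻¹ • B.restrict (fixedSubmodule ρ H)

theorem toMatrix_fixedForm {m : Type*} [Fintype m] [DecidableEq m] (ρ : Representation K G V)
    (H : Subgroup G) (B : LinearMap.BilinForm K V)
    (b : Module.Basis m K (fixedSubmodule ρ H)) :
    toMatrix b (fixedForm ρ H B) = Matrix.of fun a c => (Nat.card H : K)⁻¹ * B (b a) (b c) := by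
  ext a c
  simp [fixedForm, LinearMap.BilinForm.toMatrix_apply]

variable {ρ : Representation K G V} {B : LinearMap.BilinForm K V}
  (hBinv : ∀ (g : G) (v w : V), B (ρ g v) (ρ g w) = B v w)

include hBinv

theorem averagedForm_quotient [NeZero (Nat.card G : K)] (H : Subgroup G)
    [Fintype (G ⧸ H)] (f f' : equivariantFunctions ρ (G ⧸ H)) :
    averagedForm ρ (G ⧸ H) B f f' =
      fixedForm ρ H B (equivariantFunctionsQuotientEquiv ρ H f)
        (equivariantFunctionsQuotientEquiv ρ H f') := by
  have hconst : ∀ x : G ⧸ H, B (f.1 x) (f'.1 x) = B (f.1 ((1 : G) : G ⧸ H)) (f'.1 (1 : G)) := by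
    intro x
    induction x using QuotientGroup.induction_on with
    | H a => rw [← smul_quotient_mk_one, f.2, f'.2, hBinv]
  have hcard : (Nat.card G : K) = Fintype.card (G ⧸ H) * Nat.card H := by
    rw [H.card_eq_card_quotient_mul_card_subgroup, Nat.card_eq_fintype_card (α := G ⧸ H),
      Nat.cast_mul]
  have hne : (Fintype.card (G ⧸ H) : K) ≠ 0 :=
    left_ne_zero_of_mul (hcard ▸ NeZero.ne (Nat.card G : K))
  change _ = (Nat.card H : K)⁻¹ * B (f.1 ((1 : G) : G ⧸ H)) (f'.1 (1 : G))
  rw [averagedForm_apply, Finset.sum_congr rfl fun x _ => hconst x, Finset.sum_const,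
    Finset.card_univ, nsmul_eq_mul, hcard, mul_inv, mul_assoc, mul_left_comm,
    inv_mul_cancel_left₀ hne]

end FixedSubmodules

section RegulatorConstant

open LinearMap.BilinForm (toMatrix)

variable {G K V : Type} [Group G] [Field K] [AddCommGroup V] [Module K V]
  {ι κ : Type*} [Fintype ι] [Fintype κ] {ρ : Representation K G V}
  {H : ι → Subgroup G} {H' : κ → Subgroup G}
  {m : ι → Type*} [∀ i, Fintype (m i)] [∀ i, DecidableEq (m i)]
  {m' : κ → Type*} [∀ j, Fintype (m' j)] [∀ j, DecidableEq (m' j)]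

/-- The quotient of Gram determinants of `B` attached to the relation `∑ H i - ∑ H' j` between
permutation representations. Its class modulo squares is the regulator constant of `ρ`; the
bases `b` and `b'` are kept as arguments since they determine the actual value. -/
noncomputable def regulatorConstant (B : LinearMap.BilinForm K V)
    (b : ∀ i, Module.Basis (m i) K (fixedSubmodule ρ (H i)))
    (b' : ∀ j, Module.Basis (m' j) K (fixedSubmodule ρ (H' j))) : K :=
  (∏ i, (toMatrix (b i) (fixedForm ρ (H i) B)).det) /
    ∏ j, (toMatrix (b' j) (fixedForm ρ (H' j) B)).det

theorem exists_basis_det_averagedForm_eq_prod [DecidableEq ι] [NeZero (Nat.card G : K)]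
    [∀ i, Fintype (G ⧸ H i)] {B : LinearMap.BilinForm K V}
    (hBinv : ∀ (g : G) (v w : V), B (ρ g v) (ρ g w) = B v w)
    (b : ∀ i, Module.Basis (m i) K (fixedSubmodule ρ (H i))) :
    ∃ c : Module.Basis (Σ i, m i) K (equivariantFunctions ρ (Σ i, G ⧸ H i)),
      (toMatrix c (averagedForm ρ _ B)).det =
        ∏ i, (toMatrix (b i) (fixedForm ρ (H i) B)).det := by
  refine ⟨_, det_toMatrix_eq_prod_of_eq_sum b (equivariantFunctionsSigmaEquiv _ ρ ≪≫ₗ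
    LinearEquiv.piCongrRight fun i => equivariantFunctionsQuotientEquiv ρ (H i)) _ _ ?_⟩
  intro f f'
  rw [averagedForm_sigma]
  exact Finset.sum_congr rfl fun i _ => averagedForm_quotient hBinv (H i) _ _

theorem eqUpToSquare_regulatorConstant_inv_det [Finite G] [NeZero (Nat.card G : K)]
    [FiniteDimensional K V] [∀ i, Fintype (G ⧸ H i)] [∀ j, Fintype (G ⧸ H' j)]
    [DecidableEq (Σ i, G ⧸ H i)] [DecidableEq (Σ j, G ⧸ H' j)]
    {M : Matrix (Σ j, G ⧸ H' j) (Σ i, G ⧸ H i) K} {L : Matrix (Σ i, G ⧸ H i) (Σ j, G ⧸ H' j) K}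
    (hM : IsInvariantMatrix G M) (hLM : L * M = 1) (hML : M * L = 1)
    {B : LinearMap.BilinForm K V} (hBinv : ∀ (g : G) (v w : V), B (ρ g v) (ρ g w) = B v w)
    (hB : B.SeparatingLeft) (b : ∀ i, Module.Basis (m i) K (fixedSubmodule ρ (H i)))
    (b' : ∀ j, Module.Basis (m' j) K (fixedSubmodule ρ (H' j))) :
    EqUpToSquare (regulatorConstant B b b')
      (LinearMap.det ((hM.transpose.mul hM).mapEquivariant ρ))⁻¹ := by
  classical
  obtain ⟨c, hc⟩ := exists_basis_det_averagedForm_eq_prod hBinv b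
  obtain ⟨c', hc'⟩ := exists_basis_det_averagedForm_eq_prod hBinv b'
  have hne : (toMatrix c (averagedForm ρ _ B)).det ≠ 0 :=
    (LinearMap.BilinForm.nondegenerate_iff_det_ne_zero c).mp
      (.ofSeparatingLeft (separatingLeft_averagedForm hBinv hB))
  have hpull : ∀ f f', averagedForm ρ _ B (hM.equivariantEquiv ρ hLM hML f)
      (hM.equivariantEquiv ρ hLM hML f') =
        averagedForm ρ _ B ((hM.transpose.mul hM).mapEquivariant ρ f) f' := by
    intro f f'
    rw [IsInvariantMatrix.mapEquivariant_mul ρ hM.transpose hM]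
    exact (averagedForm_mapEquivariant_transpose ρ B hM _ f').symm
  rw [regulatorConstant, ← hc, ← hc']
  exact (eqUpToSquare_det_toMatrix_of_pullback_eq_compLeft c c' _ _ _ _ hpull).div_of_eq_mul hne

end RegulatorConstant

theorem gram_det_quotient_eq_prod_regulator_constants_general
    {G K : Type} {L : Type*} [Group G] [Finite G] [Field K] [Infinite K] [NeZero (Nat.card G : K)]
    [CommRing L] [Nontrivial L] [Algebra K L]
    {ι κ τ : Type*} [Fintype ι] [Fintype κ] [Fintype τ]
    {H : ι → Subgroup G} {H' : κ → Subgroup G}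
    (e : ((Σ i, G ⧸ H i) →₀ L) ≃ₗ[L] ((Σ j, G ⧸ H' j) →₀ L))
    (he : ∀ (g : G) (v : (Σ i, G ⧸ H i) →₀ L),
      e (Representation.ofMulAction L G (Σ i, G ⧸ H i) g (MonoidAlgebra.ofCoeff v)).coeff =
        (Representation.ofMulAction L G (Σ j, G ⧸ H' j) g (MonoidAlgebra.ofCoeff (e v))).coeff)
    {W : τ → Type} [∀ k, AddCommGroup (W k)] [∀ k, Module K (W k)]
    [∀ k, FiniteDimensional K (W k)] {ρ : ∀ k, Representation K G (W k)}
    {V : Type} [AddCommGroup V] [Module K V] {ρV : Representation K G V}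
    {n : τ → ℕ} (ψ : V ≃ₗ[K] ∀ k, Fin (n k) → W k)
    (hψ : ∀ (g : G) (v : V), ψ (ρV g v) = fun k m => ρ k g (ψ v k m))
    {B : LinearMap.BilinForm K V} (hBinv : ∀ (g : G) (v w : V), B (ρV g v) (ρV g w) = B v w)
    (hB : B.SeparatingLeft) {Bk : ∀ k, LinearMap.BilinForm K (W k)}
    (hBkinv : ∀ k, ∀ (g : G) (v w : W k), Bk k (ρ k g v) (ρ k g w) = Bk k v w)
    (hBk : ∀ k, (Bk k).SeparatingLeft)
    {mV : ι → Type*} [∀ i, Fintype (mV i)] [∀ i, DecidableEq (mV i)]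
    {mV' : κ → Type*} [∀ j, Fintype (mV' j)] [∀ j, DecidableEq (mV' j)]
    (bV : ∀ i, Module.Basis (mV i) K (fixedSubmodule ρV (H i)))
    (bV' : ∀ j, Module.Basis (mV' j) K (fixedSubmodule ρV (H' j)))
    {mW : τ → ι → Type*} [∀ k i, Fintype (mW k i)] [∀ k i, DecidableEq (mW k i)]
    {mW' : τ → κ → Type*} [∀ k j, Fintype (mW' k j)] [∀ k j, DecidableEq (mW' k j)]
    (bW : ∀ k i, Module.Basis (mW k i) K (fixedSubmodule (ρ k) (H i)))
    (bW' : ∀ k j, Module.Basis (mW' k j) K (fixedSubmodule (ρ k) (H' j))) :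
    EqUpToSquare (regulatorConstant B bV bV')
      (∏ k, regulatorConstant (Bk k) (bW k) (bW' k) ^ n k) := by
  classical
  have := Fintype.ofFinite G
  have : FiniteDimensional K V := Module.Finite.equiv ψ.symm
  obtain ⟨M, N, hM, hNM, hMN⟩ := exists_isInvariantMatrix_mul_eq_one K e he
  have hregV := eqUpToSquare_regulatorConstant_inv_det hM hNM hMN hBinv hB bV bV'
  have hregW k :=
    eqUpToSquare_regulatorConstant_inv_det hM hNM hMN (hBkinv k) (hBk k) (bW k) (bW' k)
  rw [(hM.transpose.mul hM).det_mapEquivariant_eq_prod_pow ρ ρV ψ hψ,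
    ← Finset.prod_inv_distrib] at hregV
  simp only [← inv_pow] at hregV
  exact hregV.trans (EqUpToSquare.prod fun k => (hregW k).pow (n k)).symm

/-- Theorem 2.5 of the paper: given a relation `⊕ᵢ ℂ[G/Hᵢ] ≅ ⊕ⱼ ℂ[G/H'ⱼ]`, pairwise
non-isomorphic irreducible rational representations `ρ_k` on spaces `W k`, a rational
representation `V ≅ ⊕_k ρ_k^{⊕n_k}` with a `G`-invariant positive-definite symmetric
bilinear form `B`, and `G`-invariant positive-definite symmetric bilinear forms `B_k` on
each `ρ_k`, the quotient of Gram determinants for `V` equals, up to a nonzero rational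
square, the product over `k` of the `n_k`-th powers of the corresponding quotients for
`ρ_k`; all Gram determinants with respect to arbitrary `ℚ`-bases of the fixed subspaces. -/
theorem gram_det_quotient_eq_prod_regulator_constants
    {G : Type} [Group G] [Fintype G]
    {r s : ℕ} (H : Fin r → Subgroup G) (H' : Fin s → Subgroup G)
    (e : ((Σ i : Fin r, G ⧸ H i) →₀ ℂ) ≃ₗ[ℂ] ((Σ j : Fin s, G ⧸ H' j) →₀ ℂ))
    (he : ∀ (g : G) (v : (Σ i : Fin r, G ⧸ H i) →₀ ℂ),
      e (Representation.ofMulAction ℂ G (Σ i : Fin r, G ⧸ H i) g (MonoidAlgebra.ofCoeff v)).coeff =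
        (Representation.ofMulAction ℂ G (Σ j : Fin s, G ⧸ H' j) g (MonoidAlgebra.ofCoeff (e v))).coeff)
    -- the pairwise non-isomorphic irreducible rational representations ρ_k
    {t : ℕ} (W : Fin t → Type)
    [∀ k, AddCommGroup (W k)] [∀ k, Module ℚ (W k)] [∀ k, FiniteDimensional ℚ (W k)]
    [∀ k, Nontrivial (W k)]
    (ρ : ∀ k, Representation ℚ G (W k))
    (hirr : ∀ k, ∀ U : Submodule ℚ (W k), (∀ g : G, ∀ w ∈ U, ρ k g w ∈ U) → U = ⊥ ∨ U = ⊤)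
    (hnoniso : ∀ k l, k ≠ l →
      ¬∃ φ : W k ≃ₗ[ℚ] W l, ∀ (g : G) (w : W k), φ (ρ k g w) = ρ l g (φ w))
    -- the rational representation V, isomorphic to ⊕_k ρ_k^{⊕ n_k}
    {V : Type} [AddCommGroup V] [Module ℚ V]
    (ρV : Representation ℚ G V)
    (n : Fin t → ℕ) (ψ : V ≃ₗ[ℚ] ∀ k, Fin (n k) → W k)
    (hψ : ∀ (g : G) (v : V), ψ (ρV g v) = fun k m => ρ k g (ψ v k m))
    -- the G-invariant positive-definite symmetric bilinear forms
    (B : V →ₗ[ℚ] V →ₗ[ℚ] ℚ)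
    (hBinv : ∀ (g : G) (v w : V), B (ρV g v) (ρV g w) = B v w)
    (hBsymm : ∀ v w : V, B v w = B w v)
    (hBpos : ∀ v : V, v ≠ 0 → 0 < B v v)
    (Bk : ∀ k, W k →ₗ[ℚ] W k →ₗ[ℚ] ℚ)
    (hBkinv : ∀ k, ∀ (g : G) (v w : W k), Bk k (ρ k g v) (ρ k g w) = Bk k v w)
    (hBksymm : ∀ k, ∀ v w : W k, Bk k v w = Bk k w v)
    (hBkpos : ∀ k, ∀ v : W k, v ≠ 0 → 0 < Bk k v v)
    -- arbitrary bases of the fixed subspaces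
    (dV : Fin r → ℕ) (dV' : Fin s → ℕ)
    (bV : ∀ i, Module.Basis (Fin (dV i)) ℚ (fixedSubmodule ρV (H i)))
    (bV' : ∀ j, Module.Basis (Fin (dV' j)) ℚ (fixedSubmodule ρV (H' j)))
    (dW : Fin t → Fin r → ℕ) (dW' : Fin t → Fin s → ℕ)
    (bW : ∀ k i, Module.Basis (Fin (dW k i)) ℚ (fixedSubmodule (ρ k) (H i)))
    (bW' : ∀ k j, Module.Basis (Fin (dW' k j)) ℚ (fixedSubmodule (ρ k) (H' j))) :
    ∃ q : ℚ, q ≠ 0 ∧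
      (∏ i, (Matrix.of fun a c : Fin (dV i) =>
          ((Nat.card (H i) : ℚ))⁻¹ * B (bV i a : V) (bV i c : V)).det) /
        (∏ j, (Matrix.of fun a c : Fin (dV' j) =>
          ((Nat.card (H' j) : ℚ))⁻¹ * B (bV' j a : V) (bV' j c : V)).det) =
      q ^ 2 * ∏ k,
        ((∏ i, (Matrix.of fun a c : Fin (dW k i) =>
            ((Nat.card (H i) : ℚ))⁻¹ * Bk k (bW k i a : W k) (bW k i c : W k)).det) /
          (∏ j, (Matrix.of fun a c : Fin (dW' k j) =>
            ((Nat.card (H' j) : ℚ))⁻¹ * Bk k (bW' k j a : W k) (bW' k j c : W k)).det)) ^ (n k) := by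
  simpa only [EqUpToSquare, regulatorConstant, toMatrix_fixedForm] using
    gram_det_quotient_eq_prod_regulator_constants_general e he ψ hψ hBinv
      (separatingLeft_of_forall_pos hBpos) hBkinv
      (fun k => separatingLeft_of_forall_pos (hBkpos k)) bV bV' bW bW'
end
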